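/- arXiv:1811.07333 — 4 statements merged into one kernel-verified Lean document; each statement's English description precedes it below -/
import Mathlib

section
/- Let n ≥ 0 and t ∈ ℝ. Regard σ_t as a map of the open set {(x,y) ∈ ℝ^{n+1} × ℝ^{n+1} : y ≠ 0}, and let (x,y) ∈ M_n with y ≠ 0. Then for every vector a = (a₁,a₂) in the tangent space T_{(x,y)}M_n, the canonical 1-form is preserved: λ_{σ_t(x,y)}(Dσ_t|_{(x,y)}(a)) = λ_{(x,y)}(a), where Dσ_t|_{(x,y)} is the Fréchet derivative of σ_t at (x,y). (This expresses that σ_t, the time-t normalized geodesic flow, is an exact symplectomorphism of T*Sⁿ away from the zero section.) -/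
open scoped RealInnerProductSpace

/-- The map `σ_t(x,y) = (cos t · x + (sin t / ‖y‖) · y, −‖y‖ sin t · x + cos t · y)`. -/
noncomputable def sigmaT {m : ℕ} (t : ℝ)
    (p : EuclideanSpace ℝ (Fin m) × EuclideanSpace ℝ (Fin m)) :
    EuclideanSpace ℝ (Fin m) × EuclideanSpace ℝ (Fin m) :=
  (Real.cos t • p.1 + (Real.sin t / ‖p.2‖) • p.2,
   (-(‖p.2‖ * Real.sin t)) • p.1 + Real.cos t • p.2)

/-!
Where `y ≠ 0`, the pullback `σ_t^* λ` differs from `λ` by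
`-sin² t · d⟪x, y⟫ - ‖y‖ sin t cos t · d(‖x‖² / 2) + sin² t · ⟪x, y⟫ · d(log ‖y‖)`.
On vectors tangent to a level set of `‖x‖` inside `{⟪x, y⟫ = 0}` the first two terms vanish
because they are multiples of differentials of constants, and the third because its
coefficient is zero.
-/

section InnerProductSpace

variable {E : Type*} [NormedAddCommGroup E] [InnerProductSpace ℝ E]

theorem hasFDerivAt_norm {y : E} (hy : y ≠ 0) :
    HasFDerivAt (fun z : E ↦ ‖z‖) (‖y‖⁻¹ • innerSL ℝ y) y := by
  have hsqrt := (hasStrictFDerivAt_norm_sq y).hasFDerivAt.sqrt (by simpa using hy)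
  simp only [Real.sqrt_sq (norm_nonneg _)] at hsqrt
  refine hsqrt.congr_fderiv ?_
  rw [← Nat.cast_smul_eq_nsmul ℝ, smul_smul]
  congr 1
  field

theorem hasFDerivAt_inv_norm {y : E} (hy : y ≠ 0) :
    HasFDerivAt (fun z : E ↦ ‖z‖⁻¹) (-(‖y‖ ^ 3)⁻¹ • innerSL ℝ y) y := by
  have hcomp :=
    (hasDerivAt_inv (norm_ne_zero_iff.mpr hy)).comp_hasFDerivAt y (hasFDerivAt_norm hy)
  refine hcomp.congr_fderiv ?_
  rw [smul_smul]
  congr 1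
  ring

/-- The canonical 1-form `λ = ∑ yᵢ dxᵢ` on `T*E = E × E`, the fibre being identified with `E`
through the inner product. -/
noncomputable def canonicalOneForm (p : E × E) : E × E →L[ℝ] ℝ :=
  innerSL ℝ p.2 ∘L ContinuousLinearMap.fst ℝ E E

theorem canonicalOneForm_apply (p a : E × E) : canonicalOneForm p a = ⟪p.2, a.1⟫ :=
  rfl

/-- The map `σ_t` over an arbitrary real inner product space. On `‖x‖ = 1`, `⟪x, y⟫ = 0`, `y ≠ 0`
it is the time-`t` geodesic flow of the unit sphere, run at unit speed whatever `‖y‖` is. -/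
noncomputable def normalizedGeodesicFlow (t : ℝ) (p : E × E) : E × E :=
  (Real.cos t • p.1 + (Real.sin t / ‖p.2‖) • p.2,
   (-(‖p.2‖ * Real.sin t)) • p.1 + Real.cos t • p.2)

theorem differentiableAt_normalizedGeodesicFlow (t : ℝ) (x : E) {y : E} (hy : y ≠ 0) :
    DifferentiableAt ℝ (normalizedGeodesicFlow t) (x, y) := by
  have hnorm : DifferentiableAt ℝ (fun p : E × E ↦ ‖p.2‖) (x, y) :=
    differentiableAt_snd.norm ℝ hy
  have hinv : DifferentiableAt ℝ (fun p : E × E ↦ ‖p.2‖⁻¹) (x, y) :=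
    hnorm.fun_inv (norm_ne_zero_iff.mpr hy)
  unfold normalizedGeodesicFlow
  simp only [div_eq_mul_inv]
  fun_prop

theorem fderiv_normalizedGeodesicFlow_apply_fst (t : ℝ) (x : E) {y : E} (hy : y ≠ 0)
    (a : E × E) :
    (fderiv ℝ (normalizedGeodesicFlow t) (x, y) a).1 =
      Real.cos t • a.1 + (Real.sin t / ‖y‖) • a.2 -
        (Real.sin t * ⟪y, a.2⟫ / ‖y‖ ^ 3) • y := by
  have hinv : HasFDerivAt (fun p : E × E ↦ ‖p.2‖⁻¹)
      ((-(‖y‖ ^ 3)⁻¹ • innerSL ℝ y) ∘L ContinuousLinearMap.snd ℝ E E) (x, y) :=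
    HasFDerivAt.comp (g := fun z : E ↦ ‖z‖⁻¹) (x, y) (hasFDerivAt_inv_norm hy) hasFDerivAt_snd
  have hfst : HasFDerivAt (fun p ↦ (normalizedGeodesicFlow t p).1) _ (x, y) :=
    (hasFDerivAt_fst.const_smul (Real.cos t)).add
      ((hinv.const_mul (Real.sin t)).smul (hasFDerivAt_snd (𝕜 := ℝ)))
  have hflow := (differentiableAt_normalizedGeodesicFlow t x hy).hasFDerivAt
  refine (DFunLike.congr_fun (hflow.fst.unique hfst) a).trans ?_
  simp only [add_apply, smul_apply, ContinuousLinearMap.coe_fst', ContinuousLinearMap.coe_snd',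
    ContinuousLinearMap.smulRight_apply, ContinuousLinearMap.comp_apply, coe_innerSL_apply,
    smul_eq_mul]
  module

theorem canonicalOneForm_fderiv_normalizedGeodesicFlow (t : ℝ) (x : E) {y : E} (hy : y ≠ 0)
    (a : E × E) :
    canonicalOneForm (normalizedGeodesicFlow t (x, y))
        (fderiv ℝ (normalizedGeodesicFlow t) (x, y) a) =
      canonicalOneForm (x, y) a
        - Real.sin t ^ 2 * (⟪a.1, y⟫ + ⟪x, a.2⟫)
        - ‖y‖ * Real.sin t * Real.cos t * ⟪x, a.1⟫
        + Real.sin t ^ 2 * ⟪x, y⟫ * (⟪y, a.2⟫ / ‖y‖ ^ 2) := by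
  have hy' : ‖y‖ ≠ 0 := norm_ne_zero_iff.mpr hy
  simp only [canonicalOneForm_apply, fderiv_normalizedGeodesicFlow_apply_fst t x hy,
    normalizedGeodesicFlow, inner_add_left, inner_add_right, inner_sub_right,
    real_inner_smul_left, real_inner_smul_right, real_inner_self_eq_norm_sq, real_inner_comm y a.1]
  field_simp
  linear_combination ‖y‖ ^ 2 * ⟪y, a.1⟫ * Real.sin_sq_add_cos_sq t

theorem stmt_5_general (t : ℝ) {x y : E} (hxy : ⟪x, y⟫ = 0) (hy : y ≠ 0) {a : E × E}
    (ha1 : ⟪x, a.1⟫ = 0) (ha2 : ⟪a.1, y⟫ + ⟪x, a.2⟫ = 0) :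
    canonicalOneForm (normalizedGeodesicFlow t (x, y))
        (fderiv ℝ (normalizedGeodesicFlow t) (x, y) a) =
      canonicalOneForm (x, y) a := by
  rw [canonicalOneForm_fderiv_normalizedGeodesicFlow t x hy, hxy, ha1, ha2]
  ring

end InnerProductSpace

theorem sigmaT_eq_normalizedGeodesicFlow {m : ℕ} (t : ℝ) :
    sigmaT (m := m) t = normalizedGeodesicFlow t :=
  rfl

/-- `σ_t` preserves the canonical 1-form `λ_{(x,y)}(a₁,a₂) = ⟪y, a₁⟫` on tangent vectors
to `M_n` at points `(x,y) ∈ M_n` with `y ≠ 0`: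
`λ_{σ_t(x,y)}(Dσ_t|_{(x,y)}(a)) = λ_{(x,y)}(a)`. -/
theorem stmt_5 (n : ℕ) (t : ℝ) (x y : EuclideanSpace ℝ (Fin (n + 1)))
    (hx : ‖x‖ = 1) (hxy : ⟪x, y⟫ = 0) (hy : y ≠ 0)
    (a : EuclideanSpace ℝ (Fin (n + 1)) × EuclideanSpace ℝ (Fin (n + 1)))
    (ha1 : ⟪x, a.1⟫ = 0) (ha2 : ⟪a.1, y⟫ + ⟪x, a.2⟫ = 0) :
    ⟪(sigmaT t (x, y)).2, (fderiv ℝ (sigmaT t) (x, y) a).1⟫ = ⟪y, a.1⟫ := by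
  simpa only [sigmaT_eq_normalizedGeodesicFlow, canonicalOneForm_apply] using
    stmt_5_general t hxy hy ha1 ha2
end

section
/- Let n ≥ 0, let k be an integer, and let g : ℝ → ℝ be continuous with g(0) = kπ. Let x₀ ∈ ℝ^{n+1} with ‖x₀‖ = 1. Then, as (x,y) tends to (x₀,0) within {(x,y) ∈ M_n : y ≠ 0}, the value σ_{g(‖y‖)}(x,y) tends to ((−1)ᵏ·x₀, 0). (In particular, for odd k the k-fold Dehn–Seidel twist τ_k, defined as σ_{g_k(‖y‖)} away from the zero section, extends continuously over the zero section by −Id, as in the paper's definition of τ_k.) -/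
open scoped RealInnerProductSpace Topology

/-!
The normalized vector `y / ‖y‖` has no limit as `y → 0`, but it stays bounded, and its coefficient
`sin t` in `σ_t` tends to `0` when `t` approaches a zero of the sine. So the term where `y` is
divided by its norm disappears in the limit, and only `cos t • x` survives.
-/

section

open Filter

theorem norm_div_norm_smul_le {E : Type*} [SeminormedAddCommGroup E] [NormedSpace ℝ E]
    (s : ℝ) (y : E) : ‖(s / ‖y‖) • y‖ ≤ |s| :=
  calc ‖(s / ‖y‖) • y‖ = |s| * (‖y‖ / ‖y‖) := by
        rw [norm_smul, norm_div, norm_norm, Real.norm_eq_abs, div_mul_eq_mul_div, mul_div_assoc]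
    _ ≤ |s| := mul_le_of_le_one_right (abs_nonneg s) (div_self_le_one ‖y‖)

theorem tendsto_div_norm_smul_zero {ι E : Type*} [SeminormedAddCommGroup E] [NormedSpace ℝ E]
    {l : Filter ι} {s : ι → ℝ} (hs : Tendsto s l (𝓝 0)) (y : ι → E) :
    Tendsto (fun i => (s i / ‖y i‖) • y i) l (𝓝 0) :=
  squeeze_zero_norm (fun i => norm_div_norm_smul_le (s i) (y i)) (by simpa using hs.abs)

theorem tendsto_sigmaT_of_sin_eq_zero {ι : Type*} {m : ℕ} {l : Filter ι} {t : ι → ℝ}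
    {p : ι → EuclideanSpace ℝ (Fin m) × EuclideanSpace ℝ (Fin m)} {θ : ℝ}
    {x₀ : EuclideanSpace ℝ (Fin m)} (hθ : Real.sin θ = 0) (ht : Tendsto t l (𝓝 θ))
    (hp : Tendsto p l (𝓝 (x₀, 0))) :
    Tendsto (fun i => sigmaT (t i) (p i)) l (𝓝 (Real.cos θ • x₀, 0)) := by
  have hx : Tendsto (fun i => (p i).1) l (𝓝 x₀) := hp.fst_nhds
  have hy : Tendsto (fun i => (p i).2) l (𝓝 0) := hp.snd_nhds
  have hcos : Tendsto (fun i => Real.cos (t i)) l (𝓝 (Real.cos θ)) :=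
    (Real.continuous_cos.tendsto θ).comp ht
  have hsin : Tendsto (fun i => Real.sin (t i)) l (𝓝 0) :=
    hθ ▸ (Real.continuous_sin.tendsto θ).comp ht
  refine Tendsto.prodMk_nhds ?_ ?_
  · simpa using (hcos.smul hx).add (tendsto_div_norm_smul_zero hsin fun i => (p i).2)
  · simpa using ((hy.norm.mul hsin).neg.smul hx).add (hcos.smul hy)

theorem tendsto_norm_snd_nhdsGT_zero {X E : Type*} [TopologicalSpace X] [NormedAddCommGroup E]
    (x₀ : X) :
    Tendsto (fun p : X × E => ‖p.2‖) (𝓝[{p | p.2 ≠ 0}] (x₀, 0)) (𝓝[>] 0) :=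
  tendsto_norm_nhdsNE_zero.comp <|
    continuous_snd.continuousWithinAt.tendsto_nhdsWithin fun _ hp => hp

theorem stmt_7_general {m : ℕ} {k : ℤ} {g : ℝ → ℝ}
    (hg : Tendsto g (𝓝[>] 0) (𝓝 (k * Real.pi))) (x₀ : EuclideanSpace ℝ (Fin m)) :
    Tendsto (fun p : EuclideanSpace ℝ (Fin m) × EuclideanSpace ℝ (Fin m) =>
        sigmaT (g ‖p.2‖) p)
      (𝓝[{p | p.2 ≠ 0}] (x₀, 0)) (𝓝 ((-1 : ℝ) ^ k • x₀, 0)) := by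
  rw [← Real.cos_int_mul_pi]
  exact tendsto_sigmaT_of_sin_eq_zero (Real.sin_int_mul_pi k)
    (hg.comp (tendsto_norm_snd_nhdsGT_zero x₀)) nhdsWithin_le_nhds

end

/-- If `g` is continuous with `g(0) = kπ`, then as `(x,y) → (x₀,0)` within
`{(x,y) ∈ M_n : y ≠ 0}`, the value `σ_{g(‖y‖)}(x,y)` tends to `((−1)ᵏ·x₀, 0)`.
So the `k`-fold Dehn–Seidel twist extends continuously over the zero section by
`(−1)ᵏ · Id` (by `−Id` for odd `k`). -/
theorem stmt_7 (n : ℕ) (k : ℤ) (g : ℝ → ℝ) (hg : Continuous g)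
    (hg0 : g 0 = k * Real.pi)
    (x₀ : EuclideanSpace ℝ (Fin (n + 1))) (hx₀ : ‖x₀‖ = 1) :
    Filter.Tendsto (fun p : EuclideanSpace ℝ (Fin (n + 1)) × EuclideanSpace ℝ (Fin (n + 1)) =>
        sigmaT (g ‖p.2‖) p)
      (𝓝[{p : EuclideanSpace ℝ (Fin (n + 1)) × EuclideanSpace ℝ (Fin (n + 1)) |
          ‖p.1‖ = 1 ∧ ⟪p.1, p.2⟫ = 0 ∧ p.2 ≠ 0}] (x₀, 0))
      (𝓝 (((-1 : ℝ) ^ k • x₀, 0))) :=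
  (stmt_7_general (hg0 ▸ hg.continuousWithinAt) x₀).mono_left
    (nhdsWithin_mono _ fun _ hp => hp.2.2)
end

section
/- Let n ≥ 0, let ε > 0 and δ > 0, and let g : ℝ → ℝ satisfy g(s) > ε/2 for all s with 0 ≤ s ≤ δ/2. Then for every w ∈ ℝ^{n+2} with ‖w‖ = 1 and every (x,y) ∈ M_n, the Euclidean distance in ℝ^{n+2} × ℝ^{n+2} between the point (w,0) of the zero section and the point ((x,0),(y,g(‖y‖))) is strictly greater than (1/2)·min(ε,δ). (This is the distance estimate in the proof of Theorem 1.1, which guarantees that the pushed-off copy j₁(DT*Sⁿ) stays at distance more than m₀ = (1/2)·min(ε,δ) from the zero section of DT*S^{n+1}.) -/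
open scoped RealInnerProductSpace

/-- Append a real coordinate to a vector in Euclidean space:
`snocE v c = (v, c) ∈ ℝ^{m+1}`. -/
noncomputable def snocE {m : ℕ} (v : EuclideanSpace ℝ (Fin m)) (c : ℝ) :
    EuclideanSpace ℝ (Fin (m + 1)) :=
  (EuclideanSpace.equiv (Fin (m + 1)) ℝ).symm (Fin.snoc ((EuclideanSpace.equiv (Fin m) ℝ) v) c)

section SnocE

variable {m : ℕ} (v : EuclideanSpace ℝ (Fin m)) (c : ℝ)

theorem norm_snocE_sq : ‖snocE v c‖ ^ 2 = ‖v‖ ^ 2 + c ^ 2 := by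
  simp [snocE, EuclideanSpace.norm_sq_eq, Fin.sum_univ_castSucc]

theorem norm_le_norm_snocE : ‖v‖ ≤ ‖snocE v c‖ := by
  refine le_of_sq_le_sq ?_ (norm_nonneg _)
  rw [norm_snocE_sq]
  exact le_add_of_nonneg_right (sq_nonneg c)

theorem abs_le_norm_snocE : |c| ≤ ‖snocE v c‖ := by
  refine abs_le_of_sq_le_sq ?_ (norm_nonneg _)
  rw [norm_snocE_sq]
  exact le_add_of_nonneg_left (sq_nonneg ‖v‖)

variable {v c} in
theorem min_lt_norm_snocE {a b : ℝ} (h : ‖v‖ ≤ b → a < |c|) : min a b < ‖snocE v c‖ := by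
  rcases le_or_gt ‖v‖ b with hv | hv
  · exact (min_le_left a b).trans_lt ((h hv).trans_le (abs_le_norm_snocE v c))
  · exact (min_le_right a b).trans_lt (hv.trans_le (norm_le_norm_snocE v c))

end SnocE

theorem stmt_9_general {m : ℕ} (ε δ : ℝ) (g : ℝ → ℝ)
    (hg : ∀ s : ℝ, 0 ≤ s → s ≤ δ / 2 → ε / 2 < g s)
    (w : EuclideanSpace ℝ (Fin (m + 1))) (x y : EuclideanSpace ℝ (Fin m)) :
    (1 / 2) * min ε δ <
      Real.sqrt (‖snocE x 0 - w‖ ^ 2 + ‖snocE y (g ‖y‖) - 0‖ ^ 2) := by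
  have height_lt (hy : ‖y‖ ≤ δ / 2) : ε / 2 < |g ‖y‖| :=
    (hg ‖y‖ (norm_nonneg y) hy).trans_le (le_abs_self _)
  calc (1 / 2) * min ε δ = min (ε / 2) (δ / 2) := by
        rw [min_div_div_right zero_le_two, one_div_mul_eq_div]
    _ < ‖snocE y (g ‖y‖)‖ := min_lt_norm_snocE height_lt
    _ ≤ Real.sqrt (‖snocE x 0 - w‖ ^ 2 + ‖snocE y (g ‖y‖) - 0‖ ^ 2) := by
        rw [sub_zero]
        exact Real.le_sqrt_of_sq_le (le_add_of_nonneg_left (sq_nonneg _))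

/-- The distance estimate of the proof of Theorem 1.1: if `g(s) > ε/2` for all
`0 ≤ s ≤ δ/2`, then every point `((x,0),(y,g(‖y‖)))` of the pushed-off copy
`j₁(DT*Sⁿ)` lies at Euclidean distance greater than `(1/2)·min(ε,δ)` from every point
`(w,0)` of the zero section of `DT*S^{n+1}`. -/
theorem stmt_9 (n : ℕ) (ε δ : ℝ) (hε : 0 < ε) (hδ : 0 < δ)
    (g : ℝ → ℝ) (hg : ∀ s : ℝ, 0 ≤ s → s ≤ δ / 2 → ε / 2 < g s)
    (w : EuclideanSpace ℝ (Fin (n + 2))) (hw : ‖w‖ = 1)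
    (x y : EuclideanSpace ℝ (Fin (n + 1)))
    (hx : ‖x‖ = 1) (hxy : ⟪x, y⟫ = 0) :
    (1 / 2) * min ε δ <
      Real.sqrt (‖snocE x 0 - w‖ ^ 2 + ‖snocE y (g ‖y‖) - 0‖ ^ 2) :=
  stmt_9_general ε δ g hg w x y
end

section
/- Let n ≥ 0 and let h : ℝ^{n+1} → ℝ be differentiable. Define J : ℝ^{n+1} × ℝ^{n+1} → ℝ^{n+2} × ℝ^{n+2} by J(x,y) = ((x,0),(y,h(y))). Then for every (x,y) ∈ M_n, the Fréchet derivative of J at (x,y) maps the tangent space T_{(x,y)}M_n into the tangent space T_{J(x,y)}M_{n+1}. (Together with the pullback of the canonical 1-form, this makes each j_t of Lemma 3.1 a proper symplectic embedding of the page DT*Sⁿ into the page DT*S^{n+1}.) -/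
open scoped RealInnerProductSpace

/-!
The map `J (x, y) = ((x, 0), (y, h))` preserves the functions `‖x‖ ^ 2` and `⟪x, y⟫`, whose
differentials cut out the tangent spaces of `T*Sⁿ`: the appended `0` hides the height `h` and its
derivative from every inner product involved.
-/

section SnocE

variable {m : ℕ}

theorem inner_snocE (v w : EuclideanSpace ℝ (Fin m)) (c d : ℝ) :
    ⟪snocE v c, snocE w d⟫ = ⟪v, w⟫ + c * d := by
  simp [snocE, PiLp.inner_apply, Fin.sum_univ_castSucc, mul_comm]

/-- The map `snocE` as a continuous linear map on pairs, for use in the derivative calculus. -/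
noncomputable def snocCLM (m : ℕ) :
    EuclideanSpace ℝ (Fin m) × ℝ →L[ℝ] EuclideanSpace ℝ (Fin (m + 1)) where
  toFun p := snocE p.1 p.2
  map_add' p q := by
    ext i
    cases i using Fin.lastCases <;> simp [snocE]
  map_smul' r p := by
    ext i
    cases i using Fin.lastCases <;> simp [snocE]
  cont := by
    unfold snocE
    fun_prop

theorem hasFDerivAt_snocE {E : Type*} [NormedAddCommGroup E] [NormedSpace ℝ E]
    {f : E → EuclideanSpace ℝ (Fin m)} {f' : E →L[ℝ] EuclideanSpace ℝ (Fin m)}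
    {c : E → ℝ} {c' : E →L[ℝ] ℝ} {p : E} (hf : HasFDerivAt f f' p) (hc : HasFDerivAt c c' p) :
    HasFDerivAt (fun q ↦ snocE (f q) (c q)) (snocCLM m ∘L f'.prod c') p :=
  (snocCLM m).hasFDerivAt.comp p (hf.prodMk hc)

end SnocE

section GraphEmbedding

variable {m : ℕ} {h : EuclideanSpace ℝ (Fin m) × EuclideanSpace ℝ (Fin m) → ℝ}
  {p : EuclideanSpace ℝ (Fin m) × EuclideanSpace ℝ (Fin m)}

/-- The embedding `(x, y) ↦ ((x, 0), (y, h (x, y)))` of `ℝᵐ × ℝᵐ` into `ℝᵐ⁺¹ × ℝᵐ⁺¹`. For a height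
`h` of `y` alone and `m = n + 1`, it restricts to the embedding `J` of `T*Sⁿ` into `T*Sⁿ⁺¹`. -/
noncomputable def graphEmbedding
    (h : EuclideanSpace ℝ (Fin m) × EuclideanSpace ℝ (Fin m) → ℝ)
    (p : EuclideanSpace ℝ (Fin m) × EuclideanSpace ℝ (Fin m)) :
    EuclideanSpace ℝ (Fin (m + 1)) × EuclideanSpace ℝ (Fin (m + 1)) :=
  (snocE p.1 0, snocE p.2 (h p))

theorem fderiv_graphEmbedding_apply (hh : DifferentiableAt ℝ h p)
    (a : EuclideanSpace ℝ (Fin m) × EuclideanSpace ℝ (Fin m)) :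
    fderiv ℝ (graphEmbedding h) p a = (snocE a.1 0, snocE a.2 (fderiv ℝ h p a)) := by
  have hbase := hasFDerivAt_snocE (hasFDerivAt_fst (p := p)) (hasFDerivAt_const (0 : ℝ) p)
  have hfiber := hasFDerivAt_snocE (hasFDerivAt_snd (p := p)) hh.hasFDerivAt
  exact DFunLike.congr_fun (hbase.prodMk hfiber).fderiv a

theorem stmt_13_general (hh : DifferentiableAt ℝ h p)
    (a : EuclideanSpace ℝ (Fin m) × EuclideanSpace ℝ (Fin m)) :
    ⟪(graphEmbedding h p).1, (fderiv ℝ (graphEmbedding h) p a).1⟫ = ⟪p.1, a.1⟫ ∧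
      ⟪(fderiv ℝ (graphEmbedding h) p a).1, (graphEmbedding h p).2⟫ +
        ⟪(graphEmbedding h p).1, (fderiv ℝ (graphEmbedding h) p a).2⟫ =
      ⟪a.1, p.2⟫ + ⟪p.1, a.2⟫ := by
  simp only [fderiv_graphEmbedding_apply hh, graphEmbedding, inner_snocE, zero_mul, mul_zero,
    add_zero, and_self]

end GraphEmbedding

/-- For `(x,y) ∈ M_n`, the Fréchet derivative of `J(x,y) = ((x,0),(y,h(y)))` at `(x,y)`
maps the tangent space `T_{(x,y)}M_n` into the tangent space `T_{J(x,y)}M_{n+1}`. -/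
theorem stmt_13 (n : ℕ) (h : EuclideanSpace ℝ (Fin (n + 1)) → ℝ)
    (hh : Differentiable ℝ h)
    (J : EuclideanSpace ℝ (Fin (n + 1)) × EuclideanSpace ℝ (Fin (n + 1)) →
         EuclideanSpace ℝ (Fin (n + 2)) × EuclideanSpace ℝ (Fin (n + 2)))
    (hJ : ∀ p, J p = (snocE p.1 0, snocE p.2 (h p.2)))
    (x y : EuclideanSpace ℝ (Fin (n + 1)))
    (hx : ‖x‖ = 1) (hxy : ⟪x, y⟫ = 0)
    (a : EuclideanSpace ℝ (Fin (n + 1)) × EuclideanSpace ℝ (Fin (n + 1)))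
    (ha1 : ⟪x, a.1⟫ = 0) (ha2 : ⟪a.1, y⟫ + ⟪x, a.2⟫ = 0) :
    ⟪(J (x, y)).1, (fderiv ℝ J (x, y) a).1⟫ = 0 ∧
      ⟪(fderiv ℝ J (x, y) a).1, (J (x, y)).2⟫ +
        ⟪(J (x, y)).1, (fderiv ℝ J (x, y) a).2⟫ = 0 := by
  obtain rfl : J = graphEmbedding (fun p ↦ h p.2) := funext hJ
  exact (stmt_13_general ((hh y).comp (x, y) differentiableAt_snd) a).imp
    (·.trans ha1) (·.trans ha2)
end
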